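/- Let P(z) = 1 + p_1 z + p_2 z^2 + ⋯ be a Carathéodory function with p_1 real and p_2 = p_1² − 2, and set φ = arccos(p_1/2). If g is analytic on 𝔻 with g(0) = 0, g'(0) = 1 and 1 + z g''(z)/g'(z) = P(z) on 𝔻, then g = L_φ. -/

import Mathlib

/-!
Put `c = p₁ / 2`. The Cayley transform `v = (P - 1) / (P + 1)` maps the disk to itself and
vanishes at `0`, so `v(z) = z ω(z)` with `|ω| ≤ 1`. The condition `p₂ = p₁² - 2` says exactly
that `ω` is extremal for the Schwarz-Pick inequality at the origin, whence
`ω(z) = (c - z) / (1 - c z)` and `P(z) = (1 - z²) / (1 - 2 c z + z²)` (`schwarz_pick_extremal`,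
`cara_eq`). The equation `1 + z g'' / g' = P` then says that `g'(z) (1 - 2 c z + z²)` has zero
derivative, so it is identically `1`; this is also the derivative identity satisfied by `L_φ`
with `cos φ = c` (`hasDerivAt_Lphi`), and both functions vanish at `0`.
-/

open Complex Metric

/-- The `n`-th Taylor coefficient of `f` at the origin. -/
noncomputable def taylorCoeff (f : ℂ → ℂ) (n : ℕ) : ℂ :=
  iteratedDeriv n f 0 / n.factorial

/-- `f` is a normalized convex univalent function on the unit disk:
analytic on `𝔻`, `f 0 = 0`, `f' 0 = 1`, injective on `𝔻`, and `f '' 𝔻` is convex. -/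
def IsConvexFun (f : ℂ → ℂ) : Prop :=
  DifferentiableOn ℂ f (ball (0:ℂ) 1) ∧ f 0 = 0 ∧ deriv f 0 = 1 ∧
    Set.InjOn f (ball (0:ℂ) 1) ∧ Convex ℝ (f '' ball (0:ℂ) 1)

/-- The convex function `L_φ(z) = (e^{iφ}-e^{-iφ})⁻¹ log((1-e^{-iφ}z)/(1-e^{iφ}z))`,
with the limiting interpretation `L_0(z) = z/(1-z)`, `L_π(z) = z/(1+z)` when `sin φ = 0`. -/
noncomputable def Lphi (φ : ℝ) (z : ℂ) : ℂ :=
  if Real.sin φ = 0 then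
    (if Real.cos φ = 1 then z / (1 - z) else z / (1 + z))
  else
    (Complex.exp ((φ : ℂ) * Complex.I) - Complex.exp (-(φ : ℂ) * Complex.I))⁻¹ *
      Complex.log ((1 - Complex.exp (-(φ : ℂ) * Complex.I) * z) /
        (1 - Complex.exp ((φ : ℂ) * Complex.I) * z))

/-- `P` is a Carathéodory function: analytic on `𝔻`, `P 0 = 1`, `Re P > 0` on `𝔻`. -/
def IsCara (P : ℂ → ℂ) : Prop :=
  DifferentiableOn ℂ P (ball (0:ℂ) 1) ∧ P 0 = 1 ∧ ∀ z ∈ ball (0:ℂ) 1, 0 < (P z).re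

/-! ### The extremal Carathéodory function -/

/-- Equality case of the Schwarz-Pick inequality at the origin: a holomorphic map from the disk
to the closed disk with real value `c`, `|c| < 1`, and derivative `-(1 - c²)` at `0` equals
`(c - z) / (1 - c z)`.
Composing with the disk automorphism taking `c` to `0` reduces to the Schwarz lemma. -/
lemma schwarz_pick_extremal {w : ℂ → ℂ} {c : ℝ}
    (hw : DifferentiableOn ℂ w (ball (0:ℂ) 1)) (hle : ∀ z ∈ ball (0:ℂ) 1, ‖w z‖ ≤ 1)
    (hc : |c| < 1) (h0 : w 0 = c) (hd : deriv w 0 = (c:ℂ) ^ 2 - 1) :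
    ∀ z ∈ ball (0:ℂ) 1, w z * (1 - c * z) = c - z := by
  have hc2 : c ^ 2 < 1 := (sq_lt_one_iff_abs_lt_one c).2 hc
  have hne : ∀ u : ℂ, ‖u‖ ≤ 1 → 1 - (c:ℂ) * u ≠ 0 := by
    intro u hu h
    have h1 : ‖(c:ℂ) * u‖ = 1 := by rw [← sub_eq_zero.1 h, norm_one]
    rw [norm_mul, norm_real, Real.norm_eq_abs] at h1
    nlinarith [abs_nonneg c]
  have hmem : (0:ℂ) ∈ ball (0:ℂ) 1 := by simp
  set psi : ℂ → ℂ := fun z => (w z - c) / (1 - c * w z) with hpsi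
  have hpsid : DifferentiableOn ℂ psi (ball (0:ℂ) 1) :=
    (hw.sub_const _).div ((hw.const_mul _).const_sub _) fun z hz => hne _ (hle z hz)
  have hpsi0 : psi 0 = 0 := by simp [hpsi, h0]
  have hmaps : Set.MapsTo psi (ball (0:ℂ) 1) (closedBall (psi 0) 1) := by
    intro z hz
    rw [hpsi0, mem_closedBall_zero_iff, hpsi]
    simp only [norm_div]
    apply div_le_one_of_le₀ _ (norm_nonneg _)
    apply le_of_sq_le_sq _ (norm_nonneg _)
    have h1 : ‖w z‖ ^ 2 ≤ 1 := by
      have := hle z hz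
      nlinarith [norm_nonneg (w z)]
    rw [← normSq_eq_norm_sq, normSq_apply] at h1 ⊢
    rw [← normSq_eq_norm_sq, normSq_apply]
    simp only [sub_re, sub_im, mul_re, mul_im, ofReal_re, ofReal_im, one_re, one_im]
    -- `|1 - c u|² - |u - c|² = (1 - c²)(1 - |u|²)`
    nlinarith [mul_nonneg (sub_nonneg.2 hc2.le) (sub_nonneg.2 h1)]
  have hpsider : deriv psi 0 = -1 := by
    have hwd : HasDerivAt w ((c:ℂ) ^ 2 - 1) 0 := by
      rw [← hd]
      exact (hw.differentiableAt (isOpen_ball.mem_nhds hmem)).hasDerivAt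
    have hn := hne _ (hle 0 hmem)
    have := ((hwd.sub_const (c:ℂ)).div ((hwd.const_mul (c:ℂ)).const_sub 1) hn).deriv
    rw [h0] at hn
    refine this.trans ?_
    rw [h0, div_eq_iff (pow_ne_zero 2 hn)]
    ring
  intro z hz
  have := affine_of_mapsTo_ball_of_norm_dslope_eq_div hpsid hmaps hmem
    (by rw [dslope_same, hpsider]; simp) hz
  simp only [hpsi0, dslope_same, hpsider] at this
  simp only [hpsi] at this
  rw [div_eq_iff (hne _ (hle z hz))] at this
  simp only [sub_zero, zero_add, smul_eq_mul] at this
  linear_combination this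

/-- The two coefficients determine `P`: the quotient `ω(z) = (P - 1) / (z (P + 1))` maps
the disk to the closed disk, with `ω 0 = c = p₁ / 2` and, since `p₂ = 2 ω' 0 + 2 c²`,
`ω' 0 = c² - 1`. For `|c| = 1` the Schwarz lemma for `z ω` applies instead. -/
lemma cara_eq {P : ℂ → ℂ} (hP : IsCara P) {c : ℝ}
    (h1 : taylorCoeff P 1 = 2 * c) (h2 : taylorCoeff P 2 = (taylorCoeff P 1) ^ 2 - 2) :
    |c| ≤ 1 ∧ ∀ z ∈ ball (0:ℂ) 1, P z * (1 - 2 * c * z + z ^ 2) = 1 - z ^ 2 := by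
  obtain ⟨hPd, hP0, hPre⟩ := hP
  have hmem : (0:ℂ) ∈ ball (0:ℂ) 1 := by simp
  have hnhds : ball (0:ℂ) 1 ∈ nhds (0:ℂ) := isOpen_ball.mem_nhds hmem
  have hne : ∀ z ∈ ball (0:ℂ) 1, P z + 1 ≠ 0 := by
    intro z hz h
    have := congrArg re h
    have := hPre z hz
    simp at *
    linarith
  set v : ℂ → ℂ := fun z => (P z - 1) / (P z + 1) with hv
  have hvd : DifferentiableOn ℂ v (ball (0:ℂ) 1) :=
    (hPd.sub_const _).div (hPd.add_const _) hne
  have hv0 : v 0 = 0 := by simp [hv, hP0]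
  have hmaps : Set.MapsTo v (ball (0:ℂ) 1) (closedBall (v 0) 1) := by
    intro z hz
    rw [hv0, mem_closedBall_zero_iff, hv]
    simp only [norm_div]
    apply div_le_one_of_le₀ _ (norm_nonneg _)
    apply le_of_sq_le_sq _ (norm_nonneg _)
    rw [← normSq_eq_norm_sq, normSq_apply, ← normSq_eq_norm_sq, normSq_apply]
    simp only [sub_re, sub_im, add_re, add_im, one_re, one_im]
    nlinarith [hPre z hz]
  set w : ℂ → ℂ := dslope v 0 with hw
  have hwd : DifferentiableOn ℂ w (ball (0:ℂ) 1) := (differentiableOn_dslope hnhds).2 hvd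
  have hwle : ∀ z ∈ ball (0:ℂ) 1, ‖w z‖ ≤ 1 := fun z hz => by
    simpa using norm_dslope_le_div_of_mapsTo_ball hvd hmaps hz
  have hvw : ∀ z, v z = z * w z := fun z => by
    have := sub_smul_dslope v 0 z
    simpa [hv0] using this.symm
  have hPw : ∀ z ∈ ball (0:ℂ) 1, P z = 1 + z * (w z * (P z + 1)) := by
    intro z hz
    have h := hvw z
    rw [hv] at h
    simp only at h
    rw [div_eq_iff (hne z hz)] at h
    linear_combination h
  set h : ℂ → ℂ := fun z => w z * (P z + 1) with hh
  have hhd : DifferentiableOn ℂ h (ball (0:ℂ) 1) := hwd.mul (hPd.add_const _)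
  have hP' : ∀ z ∈ ball (0:ℂ) 1, deriv P z = h z + z * deriv h z := by
    intro z hz
    have hz' := isOpen_ball.mem_nhds hz
    have he : P =ᶠ[nhds z] fun z => 1 + z * h z := by
      filter_upwards [hz'] with y hy using hPw y hy
    rw [he.deriv_eq]
    have := (((hasDerivAt_id z).mul (hhd.differentiableAt hz').hasDerivAt).const_add 1).deriv
    refine this.trans ?_
    simp
  have hP1 : deriv P 0 = 2 * c := by
    rw [← h1]; simp [taylorCoeff, iteratedDeriv_one]
  have hw0 : w 0 = c := by
    have := hP' 0 hmem
    simp only [hP1, hh, hP0] at this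
    linear_combination -this / 2
  have hP2 : deriv (deriv P) 0 = 2 * deriv h 0 := by
    have he : deriv P =ᶠ[nhds 0] fun z => h z + z * deriv h z := by
      filter_upwards [hnhds] with y hy using hP' y hy
    rw [he.deriv_eq]
    have hh0 := (hhd.differentiableAt hnhds).hasDerivAt
    have hh1 := ((hhd.deriv isOpen_ball).differentiableAt hnhds).hasDerivAt
    refine (hh0.add ((hasDerivAt_id (0:ℂ)).mul hh1)).deriv.trans ?_
    simp
    ring
  have hw1 : deriv w 0 = (c:ℂ) ^ 2 - 1 := by
    have hd := ((hwd.differentiableAt hnhds).hasDerivAt.mul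
      ((hPd.differentiableAt hnhds).hasDerivAt.add_const 1)).deriv
    have hd' : deriv h 0 = deriv w 0 * (P 0 + 1) + w 0 * deriv P 0 := hd
    have h2' : taylorCoeff P 2 = deriv (deriv P) 0 / 2 := by
      simp [taylorCoeff, iteratedDeriv_succ, iteratedDeriv_zero]
    rw [h2', hP2, hd', h1, hP0, hw0, hP1] at h2
    linear_combination h2 / 2
  have hcle : |c| ≤ 1 := by
    have := hwle 0 hmem
    rwa [hw0, norm_real, Real.norm_eq_abs] at this
  have key : ∀ z ∈ ball (0:ℂ) 1, v z * (1 - c * z) = z * (c - z) := by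
    rcases hcle.lt_or_eq with hlt | heq
    · intro z hz
      rw [hvw]
      linear_combination z * schwarz_pick_extremal hwd hwle hlt hw0 hw1 z hz
    · intro z hz
      have hc2 : (c:ℂ) ^ 2 = 1 := by
        rw [← ofReal_pow, ← sq_abs, heq]; simp
      have := affine_of_mapsTo_ball_of_norm_dslope_eq_div hvd hmaps hmem
        (by rw [← hw, hw0, norm_real, Real.norm_eq_abs, heq]; simp) hz
      simp only [hv0, ← hw, hw0, sub_zero, zero_add, smul_eq_mul] at this
      rw [this]
      linear_combination -z ^ 2 * hc2
  refine ⟨hcle, fun z hz => ?_⟩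
  have hk := key z hz
  rw [hv] at hk
  simp only at hk
  rw [div_mul_eq_mul_div, div_eq_iff (hne z hz)] at hk
  linear_combination hk

/-! ### The derivative of `L_φ` -/

/-- Two points of the right half-plane have arguments differing by less than `π`. -/
lemma div_mem_slitPlane {u v : ℂ} (hu : 0 < u.re) (hv : 0 < v.re) : u / v ∈ slitPlane := by
  rw [mem_slitPlane_iff_not_le_zero]
  intro h
  have hv0 : v ≠ 0 := fun h => by simp [h] at hv
  obtain ⟨hre, him⟩ := le_def.1 h
  have hmul : u = u / v * v := (div_mul_cancel₀ u hv0).symm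
  have := congrArg re hmul
  rw [mul_re, him] at this
  simp only [zero_re, zero_im, zero_mul, sub_zero] at this hre
  nlinarith

lemma one_sub_mul_re_pos {a z : ℂ} (ha : ‖a‖ = 1) (hz : z ∈ ball (0:ℂ) 1) :
    0 < (1 - a * z).re := by
  have h1 : ‖a * z‖ < 1 := by
    rw [norm_mul, ha, one_mul]; exact mem_ball_zero_iff.1 hz
  have h2 := re_le_norm (a * z)
  simp only [sub_re, one_re]
  linarith

/-- All three branches of `L_φ` have derivative `1 / (1 - 2 z cos φ + z²)` on the disk. -/
lemma hasDerivAt_Lphi (φ : ℝ) {z : ℂ} (hz : z ∈ ball (0:ℂ) 1) :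
    HasDerivAt (Lphi φ) (1 - 2 * (Real.cos φ : ℂ) * z + z ^ 2)⁻¹ z := by
  have hpos : ∀ a : ℂ, ‖a‖ = 1 → 1 - a * z ≠ 0 := fun a ha h => by
    have := one_sub_mul_re_pos ha hz
    simp [h] at this
  by_cases hs : Real.sin φ = 0
  · by_cases hc : Real.cos φ = 1
    · have he : Lphi φ = fun z => z / (1 - z) := by ext y; simp [Lphi, hs, hc]
      have hn : 1 - z ≠ 0 := by simpa using hpos 1 (by simp)
      rw [he, hc]
      convert! (hasDerivAt_id z).div ((hasDerivAt_id z).const_sub 1) hn using 1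
      have : 1 - 2 * ((1:ℝ):ℂ) * z + z ^ 2 = (1 - z) ^ 2 := by push_cast; ring
      rw [this]
      simp only [id]
      field_simp
      ring
    · have he : Lphi φ = fun z => z / (1 + z) := by ext y; simp [Lphi, hs, hc]
      have hn : 1 + z ≠ 0 := by simpa using hpos (-1) (by simp)
      have hc' : Real.cos φ = -1 := by
        have := Real.sin_sq_add_cos_sq φ
        rw [hs] at this
        have h2 : (Real.cos φ - 1) * (Real.cos φ + 1) = 0 := by linear_combination this
        rcases mul_eq_zero.1 h2 with h | h
        · exact absurd (sub_eq_zero.1 h) hc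
        · linarith
      rw [he, hc']
      convert! (hasDerivAt_id z).div ((hasDerivAt_id z).const_add 1) hn using 1
      have : 1 - 2 * ((-1:ℝ):ℂ) * z + z ^ 2 = (1 + z) ^ 2 := by push_cast; ring
      rw [this]
      simp only [id]
      field_simp
      ring
  · set a := exp ((φ : ℂ) * I) with ha
    set b := exp (-(φ : ℂ) * I) with hb
    have he : Lphi φ = fun z => (a - b)⁻¹ * log ((1 - b * z) / (1 - a * z)) := by
      ext y; simp [Lphi, hs, ha, hb]
    have hna : ‖a‖ = 1 := norm_exp_ofReal_mul_I φ
    have hnb : ‖b‖ = 1 := by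
      rw [hb, ← ofReal_neg]; exact norm_exp_ofReal_mul_I (-φ)
    have hab : a * b = 1 := by rw [ha, hb, ← exp_add]; simp
    have hsum : a + b = 2 * (Real.cos φ : ℂ) := by
      rw [ofReal_cos, two_cos]
    have hdiff : a - b ≠ 0 := by
      intro h0
      apply hs
      have h3 : Complex.sin φ = 0 := by
        have : Complex.sin φ = (b - a) * I / 2 := rfl
        rw [this]
        linear_combination -h0 * I / 2
      exact_mod_cast h3
    have hA := hpos a hna
    have hB := hpos b hnb
    have hslit := div_mem_slitPlane (one_sub_mul_re_pos hnb hz) (one_sub_mul_re_pos hna hz)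
    rw [he]
    have hq : 1 - 2 * (Real.cos φ : ℂ) * z + z ^ 2 = (1 - a * z) * (1 - b * z) := by
      linear_combination z * hsum - z ^ 2 * hab
    rw [hq]
    have hd1 : HasDerivAt (fun z => 1 - b * z) (-b) z := by
      simpa using ((hasDerivAt_id z).const_mul b).const_sub 1
    have hd2 : HasDerivAt (fun z => 1 - a * z) (-a) z := by
      simpa using ((hasDerivAt_id z).const_mul a).const_sub 1
    convert! ((hd1.div hd2 hA).clog hslit).const_mul (a - b)⁻¹ using 1
    simp only [Pi.div_apply]
    field_simp
    ring

/-! ### Integrating the equation for `g` -/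

theorem cara_convex_form (P : ℂ → ℂ) (hP : IsCara P)
    (h1 : (taylorCoeff P 1).im = 0)
    (h2 : taylorCoeff P 2 = (taylorCoeff P 1) ^ 2 - 2)
    (g : ℂ → ℂ) (hg : DifferentiableOn ℂ g (ball (0:ℂ) 1))
    (hg0 : g 0 = 0) (hg1 : deriv g 0 = 1)
    (hgP : ∀ z ∈ ball (0:ℂ) 1, 1 + z * deriv (deriv g) z / deriv g z = P z) :
    ∀ z ∈ ball (0:ℂ) 1, g z = Lphi (Real.arccos ((taylorCoeff P 1).re / 2)) z := by
  have hmem : (0:ℂ) ∈ ball (0:ℂ) 1 := by simp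
  have hnhds : ball (0:ℂ) 1 ∈ nhds (0:ℂ) := isOpen_ball.mem_nhds hmem
  have hconn : IsPreconnected (ball (0:ℂ) 1) := (convex_ball (0:ℂ) 1).isPreconnected
  set c : ℝ := (taylorCoeff P 1).re / 2 with hc
  have h1' : taylorCoeff P 1 = 2 * c := by
    apply Complex.ext <;> simp [hc, h1]
    ring
  obtain ⟨hcle, hPeq⟩ := cara_eq hP h1' h2
  have hcos : Real.cos (Real.arccos c) = c :=
    Real.cos_arccos (abs_le.1 hcle).1 (abs_le.1 hcle).2
  have hL := fun z (hz : z ∈ ball (0:ℂ) 1) => hasDerivAt_Lphi (Real.arccos c) hz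
  rw [hcos] at hL
  have hg' : DifferentiableOn ℂ (deriv g) (ball (0:ℂ) 1) := hg.deriv isOpen_ball
  set F : ℂ → ℂ := fun z => deriv g z * (1 - 2 * c * z + z ^ 2) with hF
  have hFder : ∀ z ∈ ball (0:ℂ) 1, HasDerivAt F
      (deriv (deriv g) z * (1 - 2 * c * z + z ^ 2) + deriv g z * (2 * z - 2 * c)) z := by
    intro z hz
    have hq : HasDerivAt (fun z : ℂ => 1 - 2 * (c:ℂ) * z + z ^ 2) (2 * z - 2 * c) z := by
      convert! (((hasDerivAt_id z).const_mul (2 * (c:ℂ))).const_sub 1).add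
        ((hasDerivAt_id z).pow 2) using 1
      simp
      ring
    exact (hg'.differentiableAt (isOpen_ball.mem_nhds hz)).hasDerivAt.mul hq
  have hFd : DifferentiableOn ℂ F (ball (0:ℂ) 1) := fun z hz =>
    (hFder z hz).differentiableAt.differentiableWithinAt
  -- Where `g'` vanishes the hypothesis reads `P z = 1` and says nothing about `g''`, so the
  -- equation `F' = 0` is obtained near the origin and extended by the identity theorem.
  have hF0 : Set.EqOn (deriv F) 0 (ball (0:ℂ) 1) := by
    refine ((hFd.deriv isOpen_ball).analyticOnNhd
      isOpen_ball).eqOn_zero_of_preconnected_of_frequently_eq_zero hconn hmem ?_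
    apply Filter.Eventually.frequently
    have hne : ∀ᶠ z in nhds (0:ℂ), deriv g z ≠ 0 :=
      (hg'.differentiableAt hnhds).continuousAt.eventually_ne (by rw [hg1]; exact one_ne_zero)
    filter_upwards [nhdsWithin_le_nhds hne, nhdsWithin_le_nhds hnhds, self_mem_nhdsWithin]
      with z hgz hz hz0
    have hz0' : z ≠ 0 := hz0
    rw [(hFder z hz).deriv]
    have h3 := hPeq z hz
    rw [← hgP z hz] at h3
    field_simp at h3
    apply mul_left_cancel₀ hz0'
    linear_combination h3
  have hFone : ∀ z ∈ ball (0:ℂ) 1, F z = 1 := by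
    intro z hz
    rw [isOpen_ball.is_const_of_deriv_eq_zero hconn hFd hF0 hz hmem]
    simp [hF, hg1]
  refine isOpen_ball.eqOn_of_deriv_eq hconn hg
    (fun z hz => (hL z hz).differentiableAt.differentiableWithinAt) ?_ hmem ?_
  · intro z hz
    rw [(hL z hz).deriv]
    exact eq_inv_of_mul_eq_one_left (hFone z hz)
  · simp [hg0, Lphi]
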